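/- arXiv:0903.2374 — 2 statements merged into one kernel-verified Lean document; each statement's English description precedes it below -/
import Mathlib

section
/- Let κ be an infinite cardinal and let τ = max(κ⁺, κ^{ℵ₀}). There exists a continuous quadratic functional P : ℓ₁(τ) → ℂ (over the complex field) which has a maximal zero subspace of density κ and another maximal zero subspace of density τ. -/
noncomputable section

universe u

/-- The complex Banach space `ℓ₁(Γ)`. -/
abbrev ell1 (Γ : Type u) : Type u := lp (fun _ : Γ => ℂ) 1

/-- The density character of a topological space: the smallest cardinality of a dense
subset. -/
def densityChar (α : Type u) [TopologicalSpace α] : Cardinal.{u} :=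
  sInf {c : Cardinal.{u} | ∃ s : Set α, Dense s ∧ Cardinal.mk s = c}

/-- `Y` is a maximal zero subspace of `P`: `P` vanishes on `Y`, and `Y` is maximal with
respect to inclusion among the subspaces on which `P` vanishes. -/
def IsMaximalZeroSubspace {X : Type u} [NormedAddCommGroup X] [Module ℂ X]
    (P : X → ℂ) (Y : Submodule ℂ X) : Prop :=
  (∀ y ∈ Y, P y = 0) ∧
  ∀ Z : Submodule ℂ X, (∀ z ∈ Z, P z = 0) → Y ≤ Z → Z = Y

namespace Z2D
open Filter Topology

lemma summ {Γ : Type u} (x : ell1 Γ) : Summable (fun i => ‖x i‖) := by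
  have := (memℓp_gen_iff (p := 1) (by simp)).1 (lp.memℓp x)
  simpa using this

lemma norm_eq {Γ : Type u} (x : ell1 Γ) : ‖x‖ = ∑' i, ‖x i‖ := by
  have := lp.norm_eq_tsum_rpow (p := 1) (by simp) x
  simpa using this

lemma summM {Γ : Type u} (M : Γ → ℂ) (hM : ∀ i, ‖M i‖ ≤ 1) (x : ell1 Γ) :
    Summable (fun i => M i * x i) := by
  refine Summable.of_norm_bounded (summ x) fun i => ?_
  rw [norm_mul]
  exact mul_le_of_le_one_left (norm_nonneg _) (hM i)

lemma boundM {Γ : Type u} (M : Γ → ℂ) (hM : ∀ i, ‖M i‖ ≤ 1) (x : ell1 Γ) :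
    ‖∑' i, M i * x i‖ ≤ ‖x‖ := by
  rw [norm_eq]
  refine tsum_of_norm_bounded (summ x).hasSum fun i => ?_
  rw [norm_mul]
  exact mul_le_of_le_one_left (norm_nonneg _) (hM i)

lemma summ2 {Γ : Type u} (M : Γ → Γ → ℂ) (hM : ∀ i j, ‖M i j‖ ≤ 1) (x y : ell1 Γ) :
    Summable (fun i => x i * ∑' j, M i j * y j) := by
  refine Summable.of_norm_bounded ((summ x).mul_right ‖y‖) fun i => ?_
  rw [norm_mul]
  exact mul_le_mul_of_nonneg_left (boundM _ (hM i) y) (norm_nonneg _)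

lemma exists_phi {Γ : Type u} (M : Γ → Γ → ℂ) (hM : ∀ i j, ‖M i j‖ ≤ 1) :
    ∃ φ : ell1 Γ →L[ℂ] ell1 Γ →L[ℂ] ℂ, ∀ x y, φ x y = ∑' i, x i * ∑' j, M i j * y j := by
  refine ⟨LinearMap.mkContinuous₂ (LinearMap.mk₂ ℂ
    (fun x y : ell1 Γ => ∑' i, x i * ∑' j, M i j * y j) ?_ ?_ ?_ ?_) 1 ?_, ?_⟩
  · intro x x' y
    rw [← (summ2 M hM x y).tsum_add (summ2 M hM x' y)]
    simp [add_mul]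
  · intro c x y
    rw [smul_eq_mul, ← tsum_mul_left]
    simp [mul_assoc]
  · intro x y y'
    rw [← (summ2 M hM x y).tsum_add (summ2 M hM x y')]
    congr 1; ext i
    rw [← mul_add, ← (summM _ (hM i) y).tsum_add (summM _ (hM i) y')]
    simp [mul_add]
  · intro c x y
    rw [smul_eq_mul, ← tsum_mul_left]
    congr 1; ext i
    rw [mul_left_comm, ← tsum_mul_left (a := c)]
    congr 2; ext j
    simp; ring
  · intro x y
    rw [LinearMap.mk₂_apply, one_mul, norm_eq x, ← tsum_mul_right]
    refine tsum_of_norm_bounded ((summ x).mul_right ‖y‖).hasSum fun i => ?_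
    rw [norm_mul]
    exact mul_le_mul_of_nonneg_left (boundM _ (hM i) y) (norm_nonneg _)
  · intro x y
    rfl

/-- vectors supported in `S` -/
def W {Γ : Type u} (S : Set Γ) : Submodule ℂ (ell1 Γ) where
  carrier := {x | ∀ i, i ∉ S → x i = 0}
  zero_mem' := by intro i _; simp
  add_mem' := by
    intro x y hx hy i hi
    simp [hx i hi, hy i hi]
  smul_mem' := by
    intro c x hx i hi
    simp [hx i hi]

/-- orthogonal complement -/
def perp {X : Type u} [NormedAddCommGroup X] [NormedSpace ℂ X] (B : X →L[ℂ] X →L[ℂ] ℂ)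
    (V : Submodule ℂ X) : Submodule ℂ X where
  carrier := {x | ∀ v ∈ V, B x v = 0}
  zero_mem' := by intro i _; simp
  add_mem' := by
    intro x y hx hy i hi
    simp [hx i hi, hy i hi]
  smul_mem' := by
    intro c x hx i hi
    simp [hx i hi]

lemma perp_max {X : Type u} [NormedAddCommGroup X] [NormedSpace ℂ X] (B : X →L[ℂ] X →L[ℂ] ℂ)
    (hB : ∀ x y, B x y = B y x)
    (V V' : Submodule ℂ X) (hV : ∀ x ∈ V, ∀ y ∈ V, B x y = 0)
    (hV' : ∀ x ∈ V', ∀ y ∈ V', B x y = 0) (h : ∀ x, ∃ v ∈ V, ∃ v' ∈ V', x = v + v') :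
    IsMaximalZeroSubspace (fun x => B x x) (perp B V) := by
  refine ⟨?_, ?_⟩
  · intro x hx
    obtain ⟨v, hv, v', hv', rfl⟩ := h x
    have h1 := hx v hv
    have h2 := hV v hv v hv
    have h3 := hV' v' hv' v' hv'
    have h4 := hB v v'
    simp only [map_add, ContinuousLinearMap.add_apply] at *
    linear_combination 2 * h1 - h2 + h3 + h4
  · intro Z hZ hle
    refine le_antisymm ?_ hle
    intro z hz v hv
    have hv' : v ∈ Z := hle (fun w hw => hV v hv w hw)
    have h1 := hZ _ (Z.add_mem hz hv')
    have h2 := hZ _ hz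
    have h3 := hZ _ hv'
    have h4 := hB z v
    simp only [map_add, ContinuousLinearMap.add_apply] at *
    linear_combination (h1 - h2 - h3 + h4) / 2

lemma dens_ge {X : Type u} [PseudoMetricSpace X] {I : Type u} (e : I → X)
    (he : ∀ i j, i ≠ j → 1 ≤ dist (e i) (e j)) : Cardinal.mk I ≤ densityChar X := by
  refine le_csInf ⟨_, Set.univ, dense_univ, rfl⟩ ?_
  rintro c ⟨s, hs, rfl⟩
  have : ∀ i, ∃ d : s, dist (e i) d < 1/2 := fun i => by
    obtain ⟨d, hd, h⟩ := hs.exists_dist_lt (e i) (ε := 1/2) (by norm_num)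
    exact ⟨⟨d, hd⟩, h⟩
  choose f hf using this
  refine Cardinal.mk_le_of_injective (f := f) fun i j hij => ?_
  by_contra hne
  have h1 := he i j hne
  have h2 := hf i
  have h3 := hf j
  rw [← hij] at h3
  have := dist_triangle_right (e i) (e j) (f i : X)
  linarith

lemma dens_sub {X : Type u} [PseudoMetricSpace X] (N : Set X) (Y : Set X)
    (c : Cardinal.{u}) (hc : Cardinal.aleph0 ≤ c) (hN : Cardinal.mk N ≤ c)
    (hY : Y ⊆ closure N) : densityChar Y ≤ c := by
  classical
  let Q := {p : N × ℕ // ∃ y : Y, dist (y : X) p.1 < 1 / (p.2 + 1 : ℝ)}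
  let f : Q → Y := fun q => q.2.choose
  have hf : ∀ q : Q, dist (f q : X) q.1.1 < 1 / (q.1.2 + 1 : ℝ) := fun q => q.2.choose_spec
  have hd : Dense (Set.range f) := by
    rw [Metric.dense_iff]
    intro y r hr
    obtain ⟨n, hn⟩ := exists_nat_one_div_lt (half_pos hr)
    obtain ⟨d, hd, h⟩ := Metric.mem_closure_iff.1 (hY y.2) (1 / (n + 1 : ℝ)) (by positivity)
    let q : Q := ⟨(⟨d, hd⟩, n), y, h⟩
    refine ⟨f q, ?_, q, rfl⟩
    rw [Metric.mem_ball, Subtype.dist_eq]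
    have h1 : dist (f q : X) d < 1 / (n + 1 : ℝ) := hf q
    have := dist_triangle_right (f q : X) y d
    linarith
  have hle : densityChar Y ≤ Cardinal.mk (Set.range f) := csInf_le' ⟨Set.range f, hd, rfl⟩
  refine hle.trans ?_
  refine Cardinal.mk_range_le.trans ?_
  refine (Cardinal.mk_subtype_le _).trans ?_
  rw [Cardinal.mk_prod]
  simp only [Cardinal.lift_id, Cardinal.lift_uzero, Cardinal.mk_nat, Cardinal.lift_aleph0]
  exact (mul_le_mul' hN hc).trans (Cardinal.mul_eq_self hc).le

lemma exists_N {Γ : Type u} (S : Set Γ) (c : Cardinal.{u}) (hc : Cardinal.aleph0 ≤ c)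
    (hS : Cardinal.mk S ≤ c) :
    ∃ N : Set (ell1 Γ), Cardinal.mk N ≤ c ∧ ((W S : Submodule ℂ (ell1 Γ)) : Set (ell1 Γ)) ⊆ closure N := by
  classical
  let f : S × ℕ → ell1 Γ := fun p =>
    lp.single (E := fun _ : Γ => ℂ) 1 p.1.1 (TopologicalSpace.denseSeq ℂ p.2)
  let N := AddSubmonoid.closure (Set.range f)
  have hT : Cardinal.mk (Set.range f) ≤ c := by
    refine Cardinal.mk_range_le.trans ?_
    rw [Cardinal.mk_prod]
    simp only [Cardinal.lift_id, Cardinal.lift_uzero, Cardinal.mk_nat, Cardinal.lift_aleph0]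
    exact (mul_le_mul' hS hc).trans (Cardinal.mul_eq_self hc).le
  refine ⟨N, ?_, ?_⟩
  · have : (N : Set (ell1 Γ)) = Set.range
        (FreeAddMonoid.lift (Subtype.val : Set.range f → ell1 Γ)) := by
      simp only [N]
      rw [AddSubmonoid.closure_eq_mrange, AddMonoidHom.coe_mrange]
    rw [this]
    refine Cardinal.mk_range_le.trans ?_
    exact (Cardinal.mk_list_le_max (Set.range f)).trans (max_le hc hT)
  · intro x hx
    have key : ∀ i ∈ S, ∀ z : ℂ, lp.single (E := fun _ : Γ => ℂ) 1 i z ∈ N.topologicalClosure := by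
      intro i hi z
      have hcont : Continuous (fun z : ℂ => (lp.single (E := fun _ : Γ => ℂ) 1 i z : ell1 Γ)) := by
        refine Isometry.continuous (Isometry.of_dist_eq fun a b => ?_)
        rw [dist_eq_norm, dist_eq_norm, ← lp.single_sub, lp.norm_single (by simp)]
      have hz : z ∈ closure (Set.range (TopologicalSpace.denseSeq ℂ)) :=
        TopologicalSpace.denseRange_denseSeq ℂ z
      refine map_mem_closure hcont hz ?_
      rintro _ ⟨n, rfl⟩
      exact AddSubmonoid.subset_closure ⟨(⟨i, hi⟩, n), rfl⟩
    have hs := lp.hasSum_single (E := fun _ : Γ => ℂ) (p := 1) (by simp) x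
    have hcl : IsClosed (N.topologicalClosure : Set (ell1 Γ)) :=
      AddSubmonoid.isClosed_topologicalClosure _
    refine hcl.mem_of_tendsto hs (Eventually.of_forall fun s => ?_)
    refine AddSubmonoid.sum_mem _ fun i _ => ?_
    by_cases hi : i ∈ S
    · exact key i hi _
    · rw [hx i hi]
      simp [AddSubmonoid.zero_mem]

lemma single_mem {Γ : Type u} [DecidableEq Γ] (S : Set Γ) (i : Γ) (hi : i ∈ S) (z : ℂ) :
    (lp.single (E := fun _ : Γ => ℂ) 1 i z : ell1 Γ) ∈ W S := by
  intro j hj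
  have : j ≠ i := by rintro rfl; exact hj hi
  simp [this]

lemma dist_single {Γ : Type u} [DecidableEq Γ] (i j : Γ) (h : i ≠ j) :
    1 ≤ dist (lp.single (E := fun _ : Γ => ℂ) 1 i 1 : ell1 Γ)
      (lp.single (E := fun _ : Γ => ℂ) 1 j 1) := by
  rw [dist_eq_norm]
  have := lp.norm_apply_le_norm (p := 1) (by simp) ((lp.single (E := fun _ : Γ => ℂ) 1 i 1 : ell1 Γ) -
      (lp.single (E := fun _ : Γ => ℂ) 1 j 1)) i
  refine le_trans ?_ this
  simp [h]

lemma dens_ge' {Γ : Type u} (S : Set Γ) (Y : Submodule ℂ (ell1 Γ)) (h : W S ≤ Y) :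
    Cardinal.mk S ≤ densityChar Y := by
  classical
  refine dens_ge (fun i : S => (⟨lp.single (E := fun _ : Γ => ℂ) 1 i.1 1,
    h (single_mem S i.1 i.2 1)⟩ : Y)) ?_
  intro i j hij
  exact dist_single i.1 j.1 (fun h => hij (Subtype.ext h))

lemma dens_le' {Γ : Type u} (S : Set Γ) (Y : Submodule ℂ (ell1 Γ)) (h : Y ≤ W S)
    (c : Cardinal.{u}) (hc : Cardinal.aleph0 ≤ c)
    (hS : Cardinal.mk S ≤ c) : densityChar Y ≤ c := by
  obtain ⟨N, hN, hW⟩ := exists_N S c hc hS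
  exact dens_sub N Y c hc hN (Set.Subset.trans h hW)

lemma decomp {Γ : Type u} (S : Set Γ) (x : ell1 Γ) :
    ∃ v ∈ W S, ∃ v' ∈ W Sᶜ, x = v + v' := by
  classical
  have hm : Memℓp (fun i => if i ∈ S then x i else 0) (1 : ENNReal) := by
    refine memℓp_gen ?_
    refine Summable.of_nonneg_of_le (fun i => by positivity) (fun i => ?_) (summ x)
    split_ifs <;> simp
  let v : ell1 Γ := ⟨fun i => if i ∈ S then x i else 0, hm⟩
  have hv : ∀ i, v i = if i ∈ S then x i else 0 := fun i => rfl
  refine ⟨v, ?_, x - v, ?_, by simp⟩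
  · intro i hi
    simp [hv, hi]
  · intro i hi
    have : i ∈ S := by simpa using hi
    simp [hv, this]

end Z2D

/-- For every infinite cardinal `κ`, with `τ = max (κ⁺, κ^ℵ₀)`, there is a continuous
quadratic functional on `ℓ₁(τ)` (i.e., `x ↦ B x x` for a continuous symmetric bilinear form
`B`) having a maximal zero subspace of density `κ` and another maximal zero subspace of
density `τ`. -/
theorem exists_quadratic_with_maximal_zero_subspaces_of_two_densities
    (κ : Cardinal.{u}) (hκ : Cardinal.aleph0 ≤ κ)
    (Γ : Type u)
    (hΓ : Cardinal.mk Γ = max (Order.succ κ) (κ ^ Cardinal.aleph0)) :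
    ∃ B : ell1 Γ →L[ℂ] ell1 Γ →L[ℂ] ℂ,
      (∀ x y : ell1 Γ, B x y = B y x) ∧
      ∃ Y₁ Y₂ : Submodule ℂ (ell1 Γ),
        IsMaximalZeroSubspace (fun x => B x x) Y₁ ∧
        IsMaximalZeroSubspace (fun x => B x x) Y₂ ∧
        densityChar ↥Y₁ = κ ∧
        densityChar ↥Y₂ = max (Order.succ κ) (κ ^ Cardinal.aleph0) := by
  classical
  let K : Type u := κ.out
  have hK : Cardinal.mk K = κ := Cardinal.mk_out κ
  have hKinf : Infinite K := Cardinal.infinite_iff.2 (hK ▸ hκ)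
  have hτ : Cardinal.mk Γ ≤ Cardinal.mk (Set K) := by
    rw [hΓ, Cardinal.mk_set, hK]
    refine max_le (Order.succ_le_of_lt (Cardinal.cantor κ)) ?_
    rw [← Cardinal.power_self_eq hκ]
    exact Cardinal.power_le_power_left (Cardinal.aleph0_pos.trans_le hκ).ne' hκ
  obtain ⟨g⟩ := hτ
  let A : Type u := Finset K × Finset K
  have hA : Cardinal.mk A = κ := by
    simp only [A, Cardinal.mk_prod, Cardinal.mk_finset_of_infinite, Cardinal.lift_id, hK]
    exact Cardinal.mul_eq_self hκ
  have hκΓ : κ ≤ Cardinal.mk Γ := by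
    rw [hΓ]; exact (Order.le_succ κ).trans (le_max_left _ _)
  have hΓinf : Cardinal.aleph0 ≤ Cardinal.mk Γ := hκ.trans hκΓ
  have hsum : Cardinal.mk Γ = Cardinal.mk (A ⊕ Γ) := by
    rw [Cardinal.mk_sum, Cardinal.lift_id, Cardinal.lift_id, hA,
      Cardinal.add_eq_right hΓinf hκΓ]
  obtain ⟨e⟩ := Cardinal.eq.1 hsum
  let m : A → Γ → ℂ := fun a c => if ∀ k ∈ a.1, (k ∈ g c ↔ k ∈ a.2) then 1 else 0
  let m' : A ⊕ Γ → A ⊕ Γ → ℂ := fun p q =>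
    Sum.elim (fun a => Sum.elim (fun _ => 0) (fun c => m a c) q) (fun _ => 0) p
  let M : Γ → Γ → ℂ := fun i j => m' (e i) (e j)
  have hM : ∀ i j, ‖M i j‖ ≤ 1 := by
    intro i j
    simp only [M]
    rcases e i with a | c <;> rcases e j with a' | c' <;> simp [m', m]
    split_ifs <;> simp
  obtain ⟨φ, hφ⟩ := Z2D.exists_phi M hM
  let S : Set Γ := Set.range (fun a : A => e.symm (Sum.inl a))
  have hSc : ∀ i, i ∉ S → ∃ c, e i = Sum.inr c := by
    intro i hi
    rcases h : e i with a | c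
    · exact absurd ⟨a, by simp [← h]⟩ hi
    · exact ⟨c, rfl⟩
  have hS : ∀ i, i ∈ S → ∃ a, e i = Sum.inl a := by
    rintro _ ⟨a, rfl⟩
    exact ⟨a, by simp⟩
  have hScard : Cardinal.mk S = κ := by
    rw [Cardinal.mk_range_eq _ (fun a b h => by simpa using h), hA]
  have hSccard : Cardinal.mk (Sᶜ : Set Γ) = Cardinal.mk Γ := by
    refine le_antisymm (Cardinal.mk_set_le _) ?_
    refine Cardinal.mk_le_of_injective
      (f := fun c : Γ => (⟨e.symm (Sum.inr c), ?_⟩ : (Sᶜ : Set Γ))) ?_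
    · rintro ⟨a, ha⟩
      simp at ha
    · intro c c' h
      simpa using h
  have h0l : ∀ x ∈ Z2D.W Sᶜ, ∀ y, φ x y = 0 := by
    intro x hx y
    rw [hφ]
    refine (tsum_congr fun i => ?_).trans tsum_zero
    by_cases hi : i ∈ S
    · rw [hx i (by simpa using hi), zero_mul]
    · obtain ⟨c, hc⟩ := hSc i hi
      simp [M, m', hc]
  have h0r : ∀ x, ∀ y ∈ Z2D.W S, φ x y = 0 := by
    intro x y hy
    rw [hφ]
    refine (tsum_congr fun i => ?_).trans tsum_zero
    rw [(tsum_congr fun j => ?_).trans tsum_zero, mul_zero]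
    by_cases hj : j ∈ S
    · obtain ⟨a, ha⟩ := hS j hj
      rcases h : e i with a' | c <;> simp [M, m', ha, h]
    · rw [hy j hj, mul_zero]
  let B := φ + φ.flip
  have hB : ∀ x y, B x y = φ x y + φ y x := fun x y => rfl
  have hsymm : ∀ x y, B x y = B y x := fun x y => by rw [hB, hB, add_comm]
  have z1 : ∀ x ∈ Z2D.W S, ∀ y ∈ Z2D.W S, B x y = 0 := fun x hx y hy => by
    rw [hB, h0r x y hy, h0r y x hx, add_zero]
  have z2 : ∀ x ∈ Z2D.W Sᶜ, ∀ y ∈ Z2D.W Sᶜ, B x y = 0 := fun x hx y hy => by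
    rw [hB, h0l x hx, h0l y hy, add_zero]
  have hperp : Z2D.perp B (Z2D.W S) ≤ Z2D.W S := by
    intro x hx
    have hz : ∀ a : A, ∑' j, M (e.symm (Sum.inl a)) j * x j = 0 := by
      intro a
      have hmem := Z2D.single_mem S (e.symm (Sum.inl a)) ⟨a, rfl⟩ 1
      have h1 := hx _ hmem
      rw [hB, h0r _ _ hmem, zero_add, hφ, tsum_eq_single (e.symm (Sum.inl a))] at h1
      · simpa using h1
      · intro i hi
        simp [hi]
    intro j₀ hj₀
    obtain ⟨c₀, hc₀⟩ := hSc j₀ hj₀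
    let a : Finset K → A := fun F => (F, F.filter (fun k => k ∈ g c₀))
    have ht : Filter.Tendsto (fun F => ∑' j, M (e.symm (Sum.inl (a F))) j * x j) Filter.atTop
        (nhds (∑' j, if j = j₀ then x j₀ else 0)) := by
      refine tendsto_tsum_of_dominated_convergence (Z2D.summ x) ?_ ?_
      · intro j
        refine tendsto_const_nhds.congr' ?_
        rcases h : e j with a' | c
        · have : j ≠ j₀ := by rintro rfl; simp [hc₀] at h
          exact Filter.Eventually.of_forall fun F => by simp [this, M, m', h]
        · by_cases hj : j = j₀
          · subst hj
            refine Filter.Eventually.of_forall fun F => ?_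
            simp +contextual [M, m', m, a, hc₀]
          · have hne : g c ≠ g c₀ := by
              intro hg
              have := g.injective hg
              subst this
              exact hj (e.injective (h.trans hc₀.symm))
            have : ∃ k, ¬ (k ∈ g c ↔ k ∈ g c₀) := by
              by_contra hcon
              push Not at hcon
              exact hne (Set.ext hcon)
            obtain ⟨k, hk⟩ := this
            filter_upwards [Filter.eventually_ge_atTop {k}] with F hF
            have hkF : k ∈ F := hF (by simp)
            have : ¬ ∀ k ∈ (a F).1, (k ∈ g c ↔ k ∈ (a F).2) := by
              intro hall
              have := hall k hkF
              simp only [a, Finset.mem_filter, hkF, true_and] at this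
              exact hk this
            have hm0 : m (a F) c = 0 := if_neg this
            simp [hj, M, m', h, hm0]
      · refine Filter.Eventually.of_forall fun F j => ?_
        rw [norm_mul]
        exact mul_le_of_le_one_left (norm_nonneg _) (hM _ _)
    simp only [hz, tsum_ite_eq] at ht
    exact (tendsto_nhds_unique ht tendsto_const_nhds)
  refine ⟨B, hsymm, Z2D.perp B (Z2D.W S), Z2D.perp B (Z2D.W Sᶜ), ?_, ?_, ?_, ?_⟩
  · exact Z2D.perp_max B hsymm _ _ z1 z2 (Z2D.decomp S)
  · refine Z2D.perp_max B hsymm _ _ z2 z1 fun x => ?_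
    obtain ⟨v, hv, v', hv', h⟩ := Z2D.decomp S x
    exact ⟨v', hv', v, hv, by rw [h, add_comm]⟩
  · refine le_antisymm (Z2D.dens_le' S _ hperp κ hκ hScard.le) ?_
    exact hScard.ge.trans (Z2D.dens_ge' S _ z1)
  · rw [← hΓ]
    refine le_antisymm (Z2D.dens_le' Set.univ _ (fun x _ i hi => absurd trivial hi) _ hΓinf
      (Cardinal.mk_set_le _)) ?_
    exact hSccard.ge.trans (Z2D.dens_ge' Sᶜ _ z2)


end
end

section
/- If a well-ordered set Γ admits a partition of the first kind f : [Γ]² → {0,1}, then the cardinality of Γ is at most 2^{ℵ₀}. -/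
noncomputable section

universe u

/-- `f : [Γ]² → 2` is a *partition of the first kind* if for every uncountable family `A` of
pairwise disjoint subsets of `Γ`, all of some fixed finite cardinality `n` (such a subset is
encoded by the strictly monotone enumeration `Fin n → Γ` of its elements), and for every
`k < n`, there exist `a, b, a', b' ∈ A` with `a ≠ b`, `a' ≠ b'` such that
`f {a(k), b(k)} = 1`, `f {a'(k), b'(k)} = 0`, and `f {a(i), b(j)} = f {a'(i), b'(j)}`
whenever `(i, j) ≠ (k, k)`. -/
def IsPartitionFirstKind {Γ : Type u} [LinearOrder Γ] (f : Sym2 Γ → Fin 2) : Prop :=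
  ∀ (n : ℕ) (A : Set (Fin n → Γ)),
    ¬ A.Countable →
    (∀ a ∈ A, StrictMono a) →
    (A.Pairwise fun a b => Disjoint (Set.range a) (Set.range b)) →
    ∀ k : Fin n,
      ∃ a ∈ A, ∃ b ∈ A, ∃ a' ∈ A, ∃ b' ∈ A,
        a ≠ b ∧ a' ≠ b' ∧
        f s(a k, b k) = 1 ∧ f s(a' k, b' k) = 0 ∧
        ∀ i j : Fin n, (i, j) ≠ (k, k) → f s(a i, b j) = f s(a' i, b' j)

theorem exists_endhom {Γ : Type u} [LinearOrder Γ] [WellFoundedLT Γ] (f : Sym2 Γ → Fin 2) :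
    ∃ S : Γ → Γ → Prop, ∀ x y, S x y ↔ (y < x ∧ ∀ z, z < y → S x z → f s(z, y) = f s(z, x)) := by
  have wf : WellFounded ((· < ·) : Γ → Γ → Prop) := wellFounded_lt
  let F : Γ → (y : Γ) → ((z : Γ) → z < y → Prop) → Prop := fun x y ih =>
    y < x ∧ ∀ z, ∀ h : z < y, ih z h → f s(z, y) = f s(z, x)
  refine ⟨fun x => wf.fix (F x), fun x y => ?_⟩
  exact iff_of_eq (wf.fix_eq (F x) y)

theorem not_uncountable_hom {Γ : Type u} [LinearOrder Γ] (f : Sym2 Γ → Fin 2)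
    (hf : IsPartitionFirstKind f) (H : Set Γ) (c : Fin 2)
    (hH : ∀ y ∈ H, ∀ z ∈ H, y < z → f s(y, z) = c) : H.Countable := by
  by_contra hc
  have hinj : Function.Injective (fun (y : Γ) (_ : Fin 1) => y) := fun a b h => congrFun h 0
  have key := hf 1 ((fun (y : Γ) (_ : Fin 1) => y) '' H)
    (fun h => hc (Set.countable_of_injective_of_countable_image hinj.injOn h))
    (by
      rintro _ ⟨y, _, rfl⟩ i j hij
      exact absurd (Subsingleton.elim i j) hij.ne)
    (by
      rintro _ ⟨y, _, rfl⟩ _ ⟨z, _, rfl⟩ hne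
      simp only [Set.range_const, Set.disjoint_singleton]
      rintro rfl
      exact hne rfl) 0
  obtain ⟨_, ⟨a, ha, rfl⟩, _, ⟨b, hb, rfl⟩, _, ⟨a', ha', rfl⟩, _, ⟨b', hb', rfl⟩, h1, h2, h3, h4, -⟩ := key
  have hh : ∀ y ∈ H, ∀ z ∈ H, y ≠ z → f s(y, z) = c := by
    intro y hy z hz hne
    rcases lt_or_gt_of_ne hne with h | h
    · exact hH y hy z hz h
    · rw [Sym2.eq_swap]
      exact hH z hz y hy h
  have e1 := hh a ha b hb (fun h => h1 (by subst h; rfl))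
  have e2 := hh a' ha' b' hb' (fun h => h2 (by subst h; rfl))
  simp only at h3 h4
  rw [h3] at e1
  rw [h4] at e2
  rw [← e2] at e1
  exact absurd e1 (by decide)

/-- If a well-ordered set `Γ` admits a partition of the first kind `f : [Γ]² → 2`, then the
cardinality of `Γ` is at most `2^ℵ₀`. -/
theorem card_le_continuum_of_partition_first_kind
    {Γ : Type u} [LinearOrder Γ] [WellFoundedLT Γ]
    (f : Sym2 Γ → Fin 2) (hf : IsPartitionFirstKind f) :
    Cardinal.mk Γ ≤ Cardinal.continuum := by
  obtain ⟨S, hS⟩ := exists_endhom f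
  have hcount : ∀ x, {y | S x y}.Countable := by
    intro x
    have hc : ∀ c : Fin 2, {y | S x y ∧ f s(y, x) = c}.Countable := by
      intro c
      refine not_uncountable_hom f hf _ c ?_
      rintro y ⟨hy, hyc⟩ z ⟨hz, -⟩ hyz
      rw [((hS x z).1 hz).2 y hyz hy, hyc]
    refine (Set.countable_iUnion hc).mono ?_
    intro y hy
    exact Set.mem_iUnion.2 ⟨f s(y, x), hy, rfl⟩
  have hg : ∀ x, ∃ g : Γ → ℕ, Set.InjOn g {y | S x y} := fun x =>
    Set.countable_iff_exists_injOn.1 (hcount x)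
  choose g hg using hg
  let code : Γ → Set (ℕ × ℕ) × Set ℕ := fun x =>
    ({p | ∃ w z, S x w ∧ S x z ∧ w ≤ z ∧ p = (g x w, g x z)},
      {n | ∃ z, S x z ∧ g x z = n ∧ f s(z, x) = 0})
  have tr : ∀ x x', code x = code x' → ∀ w z, S x w → S x z → w ≤ z →
      ∃ w' z', S x' w' ∧ S x' z' ∧ w' ≤ z' ∧ g x w = g x' w' ∧ g x z = g x' z' := by
    intro x x' h w z hw hz hwz
    have h1 : (g x w, g x z) ∈ (code x).1 := ⟨w, z, hw, hz, hwz, rfl⟩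
    rw [h] at h1
    obtain ⟨w', z', a, b, c, d⟩ := h1
    exact ⟨w', z', a, b, c, congrArg Prod.fst d, congrArg Prod.snd d⟩
  have col : ∀ x x', code x = code x' → ∀ w, S x w → S x' w → g x w = g x' w →
      f s(w, x) = 0 → f s(w, x') = 0 := by
    intro x x' h w hw hw' hgw h0
    have h1 : g x w ∈ (code x).2 := ⟨w, hw, rfl, h0⟩
    rw [h] at h1
    obtain ⟨v, hv, hv1, hv2⟩ := h1
    have : v = w := hg x' hv hw' (hv1.trans hgw)
    rwa [this] at hv2
  have col' : ∀ x x', code x = code x' → ∀ w, S x w → S x' w → g x w = g x' w →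
      f s(w, x) = f s(w, x') := by
    intro x x' h w hw hw' hgw
    have h1 := col x x' h w hw hw' hgw
    have h2 := col x' x h.symm w hw' hw hgw.symm
    generalize f s(w, x) = p at *
    generalize f s(w, x') = q at *
    revert h1 h2
    revert p q
    decide
  have key : ∀ x x', code x = code x' → ∀ z, S x z → ∀ z', S x' z' → g x z = g x' z' → z = z' := by
    intro x x' h z
    induction z using WellFoundedLT.induction with
    | ind z ih =>
    intro hz z' hz' hgz
    have P1 : ∀ w, w < z → S x w → w < z' ∧ S x' w ∧ g x w = g x' w := by
      intro w hwz hw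
      obtain ⟨w', u', hw', hu', hle, e1, e2⟩ := tr x x' h w z hw hz hwz.le
      have hu : u' = z' := hg x' hu' hz' (e2.symm.trans hgz)
      subst hu
      have hww := ih w hwz hw w' hw' e1
      subst hww
      refine ⟨lt_of_le_of_ne hle ?_, hw', e1⟩
      rintro rfl
      exact hwz.ne (hg x hw hz (e1.trans hgz.symm))
    have P2 : ∀ w, w < z' → S x' w → w < z ∧ S x w ∧ g x w = g x' w := by
      intro w' hwz' hw'
      obtain ⟨w, u, hw, hu, hle, e1, e2⟩ := tr x' x h.symm w' z' hw' hz' hwz'.le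
      have huz : u = z := hg x hu hz (e2.symm.trans hgz.symm)
      subst huz
      have hlt : w < u := by
        refine lt_of_le_of_ne hle ?_
        rintro rfl
        exact hwz'.ne (hg x' hw' hz' (e1.trans hgz))
      have hww := ih w hlt hw w' hw' e1.symm
      subst hww
      exact ⟨hlt, hw, e1.symm⟩
    rcases lt_trichotomy z z' with hlt | heq | hlt
    · have : S x' z := by
        refine (hS x' z).2 ⟨hlt.trans ((hS x' z').1 hz').1, fun w hw hSw => ?_⟩
        obtain ⟨-, a, b⟩ := P2 w (hw.trans hlt) hSw
        rw [((hS x z).1 hz).2 w hw a]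
        exact col' x x' h w a hSw b
      exact absurd (P2 z hlt this).1 (lt_irrefl _)
    · exact heq
    · have : S x z' := by
        refine (hS x z').2 ⟨hlt.trans ((hS x z).1 hz).1, fun w hw hSw => ?_⟩
        obtain ⟨-, a, b⟩ := P1 w (hw.trans hlt) hSw
        rw [((hS x' z').1 hz').2 w hw a]
        exact (col' x x' h w hSw a b).symm
      exact absurd (P1 z' hlt this).1 (lt_irrefl _)
  have sub : ∀ x x', code x = code x' → ∀ z, S x z → S x' z ∧ g x z = g x' z := by
    intro x x' h z hz
    obtain ⟨w', z', hw', -, -, e, -⟩ := tr x x' h z z hz hz le_rfl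
    have := key x x' h z hz w' hw' e
    subst this
    exact ⟨hw', e⟩
  have nlt : ∀ x x', code x = code x' → ¬ x < x' := by
    intro x x' h hlt
    have h1 : S x' x := by
      refine (hS x' x).2 ⟨hlt, fun z _ hz => ?_⟩
      obtain ⟨a, b⟩ := sub x' x h.symm z hz
      exact col' x x' h z a hz b.symm
    exact lt_irrefl _ ((hS x x).1 (sub x' x h.symm x h1).1).1
  have inj : Function.Injective code := fun x x' h =>
    le_antisymm (not_lt.1 (nlt x' x h.symm)) (not_lt.1 (nlt x x' h))
  have hcard := Cardinal.mk_le_of_injective (f := fun x => ULift.up.{u} (code x))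
    (fun a b h => inj (ULift.up_injective h))
  refine hcard.trans (le_of_eq ?_)
  simp [Cardinal.mk_uLift, Cardinal.mk_set]

end
end
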